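/- Consider an MDP congestion game whose cost vector ξ is continuously differentiable on a convex open set U containing D = ∏_i 𝒳(P^i, z₀^i) with Dξ(x) symmetric positive definite for every x ∈ U, and let F : U → ℝ be a potential function, i.e., ∂F/∂x^i(t,s,a)(x) = ℓ^i(t,s,a)(x) for all x ∈ U and all (i,t,s,a). Then x̂ ∈ D is a global minimizer of F over D if and only if x̂ is a Nash equilibrium of the game. -/

import Mathlib

open Finset

/-- The feasible set 𝒳(P, z₀) of state-action distributions. -/
def Feas {S A : Type*} [Fintype S] [Fintype A] (T : ℕ)
    (P : Fin (T+1) → S → S → A → ℝ) (z0 : S → ℝ) :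
    Set (Fin (T+1) → S → A → ℝ) :=
  {x | (∀ t s a, 0 ≤ x t s a) ∧
    (∀ s, ∑ a, x 0 s a = z0 s) ∧
    ∀ (t : ℕ) (ht : t < T), ∀ s,
      ∑ s', ∑ a, P ⟨t+1, by omega⟩ s s' a * x ⟨t, by omega⟩ s' a
        = ∑ a, x ⟨t+1, by omega⟩ s a}

/-- `P` is a transition kernel: nonnegative, and column-stochastic for t ∈ {1,…,T}. -/
def IsKernel {S A : Type*} [Fintype S] (T : ℕ)
    (P : Fin (T+1) → S → S → A → ℝ) : Prop :=
  (∀ t s' s a, 0 ≤ P t s' s a) ∧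
    ∀ t : Fin (T+1), t ≠ 0 → ∀ s a, ∑ s', P t s' s a = 1

/-- Backwards recursion for Q-values: `Qaux T P c k` is the Q-value at time T - k. -/
noncomputable def Qaux {S A : Type*} [Fintype S] [Fintype A] [Nonempty A] (T : ℕ)
    (P : Fin (T+1) → S → S → A → ℝ) (c : Fin (T+1) → S → A → ℝ) : ℕ → S → A → ℝ
  | 0, s, a => c (Fin.last T) s a
  | k+1, s, a =>
    c ⟨T - (k+1), by omega⟩ s a +
      ∑ s', P ⟨T - k, by omega⟩ s' s a *
        Finset.univ.inf' Finset.univ_nonempty (Qaux T P c k s')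

/-- Q-values: `Q(T,s,a) = c(T,s,a)`,
`Q(t-1,s,a) = c(t-1,s,a) + ∑_{s'} P(t,s',s,a) · min_{a'} Q(t,s',a')`. -/
noncomputable def Qval {S A : Type*} [Fintype S] [Fintype A] [Nonempty A] (T : ℕ)
    (P : Fin (T+1) → S → S → A → ℝ) (c : Fin (T+1) → S → A → ℝ)
    (t : Fin (T+1)) : S → A → ℝ :=
  Qaux T P c (T - t.1)

/-- x satisfies the Bellman condition for costs c:
every state-action pair played with positive probability achieves the minimal Q-value. -/
def BellmanCond {S A : Type*} [Fintype S] [Fintype A] [Nonempty A] (T : ℕ)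
    (P : Fin (T+1) → S → S → A → ℝ) (c : Fin (T+1) → S → A → ℝ)
    (x : Fin (T+1) → S → A → ℝ) : Prop :=
  ∀ t s a, 0 < x t s a →
    Qval T P c t s a = Finset.univ.inf' Finset.univ_nonempty (Qval T P c t s)

/-- Standard basis vector of the space of state-action functions. -/
def eb {S A : Type*} [DecidableEq S] [DecidableEq A] (T : ℕ)
    (t : Fin (T+1)) (s : S) (a : A) : Fin (T+1) → S → A → ℝ :=
  fun t' s' a' => if t' = t ∧ s' = s ∧ a' = a then 1 else 0

/-- Standard basis vector of the joint (N-player) space. -/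
def ebN {S A : Type*} [DecidableEq S] [DecidableEq A] (N T : ℕ)
    (i : Fin N) (t : Fin (T+1)) (s : S) (a : A) :
    Fin N → Fin (T+1) → S → A → ℝ :=
  fun j => if j = i then eb T t s a else 0

/-!
On the product `D` of the feasible sets the potential `F` is convex, because its Hessian is the
Jacobian of `ξ`. Hence `xhat` minimizes `F` over `D` iff it minimizes over `D` the linearization
`y ↦ ∑ i, ⟨ξ xhat i, y i⟩`. This objective is separable and `D` is a product, so the condition
splits into one linear programme per player. In such a programme the cost of a feasible flow `y`
equals a constant plus its pairing with the gap `Q - min Q ≥ 0`; a greedy policy makes this pairing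
vanish, so the optimal flows are those supported where the gap is zero, which is the Bellman
condition.
-/

section FirstOrder

variable {E : Type*} [AddCommGroup E] [Module ℝ E] {s : Set E} {f : E → ℝ}

theorem hasDerivWithinAt_add_smul_of_hasLineDerivWithinAt {x v : E} {f' τ : ℝ}
    (h : HasLineDerivWithinAt ℝ f f' s (x + τ • v) v) :
    HasDerivWithinAt (fun t : ℝ => f (x + t • v)) f' ((fun t : ℝ => x + t • v) ⁻¹' s) τ := by
  have hline (t : ℝ) : x + τ • v + (t - τ) • v = x + t • v := by module
  have hshift : HasDerivWithinAt (fun t : ℝ => t - τ) 1 ((fun t : ℝ => x + t • v) ⁻¹' s) τ :=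
    (hasDerivWithinAt_id τ _).sub_const τ
  have hcomp := HasDerivWithinAt.comp_of_eq τ h hshift
    (fun t ht => by simpa only [Set.mem_preimage, hline] using ht) (sub_self τ).symm
  simpa only [Function.comp_def, hline, mul_one] using hcomp

theorem convexOn_of_forall_convexOn_line (hs : Convex ℝ s)
    (hf : ∀ x ∈ s, ∀ y ∈ s, ConvexOn ℝ (Set.Icc 0 1) fun t : ℝ => f (x + t • (y - x))) :
    ConvexOn ℝ s f := by
  refine ⟨hs, fun x hx y hy a b ha hb hab => ?_⟩
  have h := (hf x hx y hy).2 (Set.left_mem_Icc.2 zero_le_one) (Set.right_mem_Icc.2 zero_le_one)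
    ha hb hab
  have hpoint : x + b • (y - x) = a • x + b • y := by
    rw [eq_sub_of_add_eq hab]; module
  simpa [hpoint] using h

theorem convexOn_of_hasLineDerivWithinAt2_nonneg (hs : Convex ℝ s) {f' f'' : E → E → ℝ}
    (hf' : ∀ x ∈ s, ∀ v, HasLineDerivWithinAt ℝ f (f' x v) s x v)
    (hf'' : ∀ x ∈ s, ∀ v, HasLineDerivWithinAt ℝ (fun y => f' y v) (f'' x v) s x v)
    (hf''₀ : ∀ x ∈ s, ∀ v, 0 ≤ f'' x v) : ConvexOn ℝ s f := by
  refine convexOn_of_forall_convexOn_line hs fun x hx y hy => ?_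
  have hmem : ∀ t ∈ Set.Icc (0 : ℝ) 1, x + t • (y - x) ∈ s := fun t ht =>
    hs.add_smul_sub_mem hx hy ht
  have hderiv : ∀ t ∈ Set.Icc (0 : ℝ) 1, HasDerivWithinAt (fun t : ℝ => f (x + t • (y - x)))
      (f' (x + t • (y - x)) (y - x)) (Set.Icc 0 1) t := fun t ht =>
    (hasDerivWithinAt_add_smul_of_hasLineDerivWithinAt (hf' _ (hmem t ht) _)).mono hmem
  have hderiv2 : ∀ t ∈ Set.Icc (0 : ℝ) 1,
      HasDerivWithinAt (fun t : ℝ => f' (x + t • (y - x)) (y - x))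
        (f'' (x + t • (y - x)) (y - x)) (Set.Icc 0 1) t := fun t ht =>
    (hasDerivWithinAt_add_smul_of_hasLineDerivWithinAt (hf'' _ (hmem t ht) _)).mono hmem
  exact convexOn_of_hasDerivWithinAt2_nonneg (convex_Icc 0 1)
    (fun t ht => (hderiv t ht).continuousWithinAt)
    (fun t ht => (hderiv t (interior_subset ht)).mono interior_subset)
    (fun t ht => (hderiv2 t (interior_subset ht)).mono interior_subset)
    fun t ht => hf''₀ _ (hmem t (interior_subset ht)) _

theorem nonneg_of_isMinOn_of_hasDerivWithinAt_Icc {g : ℝ → ℝ} {g' : ℝ}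
    (hmin : IsMinOn g (Set.Icc 0 1) 0) (hg : HasDerivWithinAt g g' (Set.Icc 0 1) 0) : 0 ≤ g' := by
  have hone : (1 : ℝ) - 0 ∈ posTangentConeAt (Set.Icc (0 : ℝ) 1) 0 :=
    sub_mem_posTangentConeAt_of_segment_subset (segment_eq_Icc zero_le_one).subset
  simpa using hmin.localize.hasFDerivWithinAt_nonneg hg.hasFDerivWithinAt hone

theorem isMinOn_iff_isMinOn_of_hasLineDerivWithinAt (hf : ConvexOn ℝ s f) {x : E} (hx : x ∈ s)
    {f' : E →ₗ[ℝ] ℝ} (hf' : ∀ v, HasLineDerivWithinAt ℝ f (f' v) s x v) :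
    IsMinOn f s x ↔ IsMinOn f' s x := by
  have hmem {y : E} (hy : y ∈ s) : ∀ t ∈ Set.Icc (0 : ℝ) 1, x + t • (y - x) ∈ s := fun t ht =>
    hf.1.add_smul_sub_mem hx hy ht
  have hderiv {y : E} (hy : y ∈ s) : HasDerivWithinAt (fun t : ℝ => f (x + t • (y - x)))
      (f' y - f' x) (Set.Icc 0 1) 0 := by
    rw [← map_sub]
    exact HasDerivWithinAt.mono (hf' (y - x)) (hmem hy)
  constructor <;> refine fun h => isMinOn_iff.2 fun y hy => sub_nonneg.1 ?_
  · have hmin : IsMinOn (fun t : ℝ => f (x + t • (y - x))) (Set.Icc 0 1) 0 :=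
      isMinOn_iff.2 fun t ht => by simpa using isMinOn_iff.1 h _ (hmem hy t ht)
    exact nonneg_of_isMinOn_of_hasDerivWithinAt_Icc hmin (hderiv hy)
  · have hconv : ConvexOn ℝ (Set.Icc 0 1) fun t : ℝ => f (x + t • (y - x)) := by
      simpa [Function.comp_def, AffineMap.lineMap_apply_module', add_comm] using
        (hf.comp_affineMap (AffineMap.lineMap x y)).subset
          (fun t ht => by simpa [AffineMap.lineMap_apply_module', add_comm] using hmem hy t ht)
          (convex_Icc 0 1)
    have hslope := hconv.le_slope_of_hasDerivWithinAt (Set.left_mem_Icc.2 zero_le_one)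
      (Set.right_mem_Icc.2 zero_le_one) zero_lt_one (hderiv hy)
    calc 0 ≤ f' y - f' x := sub_nonneg.2 (isMinOn_iff.1 h y hy)
      _ ≤ f y - f x := by simpa [slope_def_field] using hslope

end FirstOrder

theorem isMinOn_univ_pi_sum_iff {ι : Type*} [Fintype ι] {E : ι → Type*} {s : ∀ i, Set (E i)}
    {M : Type*} [AddCommMonoid M] [PartialOrder M] [IsOrderedCancelAddMonoid M]
    {φ : ∀ i, E i → M} {x : ∀ i, E i} (hx : x ∈ Set.univ.pi s) :
    IsMinOn (fun y => ∑ i, φ i (y i)) (Set.univ.pi s) x ↔ ∀ i, IsMinOn (φ i) (s i) (x i) := by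
  classical
  refine ⟨fun h i => isMinOn_iff.2 fun y hy => ?_, fun h => isMinOn_iff.2 fun y hy =>
    sum_le_sum fun i _ => isMinOn_iff.1 (h i) (y i) (hy i trivial)⟩
  have hupdate : Function.update x i y ∈ Set.univ.pi s :=
    (Set.update_mem_pi_iff_of_mem hx).2 fun _ => hy
  have hle := isMinOn_iff.1 h _ hupdate
  have hothers : ∑ j ∈ univ.erase i, φ j (Function.update x i y j) =
      ∑ j ∈ univ.erase i, φ j (x j) :=
    sum_congr rfl fun j hj => by rw [Function.update_of_ne (ne_of_mem_erase hj)]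
  rw [← add_sum_erase univ _ (mem_univ i), ← add_sum_erase univ _ (mem_univ i), hothers,
    Function.update_self] at hle
  exact le_of_add_le_add_right hle

section Flow

variable {S A : Type*} [Fintype S] [Fintype A] {T : ℕ} {P : Fin (T + 1) → S → S → A → ℝ}
  {z0 : S → ℝ} {x : Fin (T + 1) → S → A → ℝ}

theorem convex_feas : Convex ℝ (Feas T P z0) := by
  intro x hx y hy α β hα hβ hαβ
  refine ⟨fun t s a => ?_, fun s => ?_, fun t ht s => ?_⟩
  · exact add_nonneg (mul_nonneg hα (hx.1 t s a)) (mul_nonneg hβ (hy.1 t s a))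
  · simp only [Pi.add_apply, Pi.smul_apply, smul_eq_mul, sum_add_distrib, ← mul_sum,
      hx.2.1, hy.2.1]
    rw [← add_mul, hαβ, one_mul]
  · simp only [Pi.add_apply, Pi.smul_apply, smul_eq_mul, sum_add_distrib, ← mul_sum, mul_add,
      mul_left_comm _ α, mul_left_comm _ β, hx.2.2 t ht s, hy.2.2 t ht s]

theorem sum_mul_succ_of_mem_feas (hx : x ∈ Feas T P z0) (t : Fin T) (w : S → ℝ) :
    ∑ s, ∑ a, x t.succ s a * w s =
      ∑ s, ∑ a, x t.castSucc s a * ∑ s', P t.succ s' s a * w s' := by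
  have hflow (s' : S) : ∑ a, x t.succ s' a = ∑ s, ∑ a, P t.succ s' s a * x t.castSucc s a :=
    (hx.2.2 t.1 t.2 s').symm
  simp only [← sum_mul, hflow]
  simp only [sum_mul, mul_sum]
  rw [sum_comm]
  refine sum_congr rfl fun s _ => ?_
  rw [sum_comm]
  exact sum_congr rfl fun a _ => sum_congr rfl fun s' _ => by ring

/-- The total cost `⟨c, x⟩` that the state-action distribution `x` incurs under the costs `c`, as a
linear functional of `x`. -/
def totalCost (c : Fin (T + 1) → S → A → ℝ) : (Fin (T + 1) → S → A → ℝ) →ₗ[ℝ] ℝ where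
  toFun x := ∑ t, ∑ s, ∑ a, x t s a * c t s a
  map_add' x y := by simp only [Pi.add_apply, add_mul, sum_add_distrib]
  map_smul' r x := by
    simp only [Pi.smul_apply, smul_eq_mul, mul_assoc, mul_sum, RingHom.id_apply]

theorem totalCost_apply (c x : Fin (T + 1) → S → A → ℝ) :
    totalCost c x = ∑ t, ∑ s, ∑ a, x t s a * c t s a := rfl

theorem totalCost_nonneg {c : Fin (T + 1) → S → A → ℝ} (hx : 0 ≤ x) (hc : 0 ≤ c) :
    0 ≤ totalCost c x := by
  rw [totalCost_apply]
  exact sum_nonneg fun t _ => sum_nonneg fun s _ => sum_nonneg fun a _ =>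
    mul_nonneg (hx t s a) (hc t s a)

theorem totalCost_eq_zero_iff {c : Fin (T + 1) → S → A → ℝ} (hx : 0 ≤ x) (hc : 0 ≤ c) :
    totalCost c x = 0 ↔ ∀ t s a, x t s a * c t s a = 0 := by
  have hterm (t : Fin (T + 1)) (s : S) (a : A) : 0 ≤ x t s a * c t s a :=
    mul_nonneg (hx t s a) (hc t s a)
  have hsum (t : Fin (T + 1)) (s : S) : 0 ≤ ∑ a, x t s a * c t s a :=
    sum_nonneg fun a _ => hterm t s a
  simp only [totalCost_apply, sum_eq_zero_iff_of_nonneg fun t _ => sum_nonneg fun s _ => hsum t s,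
    sum_eq_zero_iff_of_nonneg fun s _ => hsum _ s, sum_eq_zero_iff_of_nonneg fun a _ => hterm _ _ a,
    mem_univ, true_imp_iff]

end Flow

section Bellman

variable {S A : Type*} [Fintype S] [Fintype A] [Nonempty A] {T : ℕ}
  {P : Fin (T + 1) → S → S → A → ℝ} {c : Fin (T + 1) → S → A → ℝ} {z0 : S → ℝ}
  {x : Fin (T + 1) → S → A → ℝ}

variable (P c) in
/-- The optimal cost-to-go `V(t,s) = min_a Q(t,s,a)`. -/
noncomputable def stateValue (t : Fin (T + 1)) (s : S) : ℝ :=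
  univ.inf' univ_nonempty (Qval T P c t s)

variable (P c) in
/-- The optimality gap `Q(t,s,a) - min_{a'} Q(t,s,a')` of the action `a`; as a cost, it charges a
distribution for its deviations from greedy play. -/
noncomputable def bellmanGap (t : Fin (T + 1)) (s : S) (a : A) : ℝ :=
  Qval T P c t s a - stateValue P c t s

theorem bellmanGap_nonneg : 0 ≤ bellmanGap P c := fun _ _ a =>
  sub_nonneg.2 (inf'_le _ (mem_univ a))

theorem Qval_last (s : S) (a : A) : Qval T P c (Fin.last T) s a = c (Fin.last T) s a := by
  simp [Qval, Qaux]

theorem Qval_castSucc (t : Fin T) (s : S) (a : A) :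
    Qval T P c t.castSucc s a =
      c t.castSucc s a + ∑ s', P t.succ s' s a * stateValue P c t.succ s' := by
  have hsub : T - t.castSucc.1 = (T - t.succ.1) + 1 := by
    simp only [Fin.val_castSucc, Fin.val_succ]; omega
  have hnow : (⟨T - ((T - t.succ.1) + 1), by omega⟩ : Fin (T + 1)) = t.castSucc :=
    Fin.ext (by simp only [Fin.val_castSucc, Fin.val_succ]; omega)
  have hnext : (⟨T - (T - t.succ.1), by omega⟩ : Fin (T + 1)) = t.succ :=
    Fin.ext (by simp only [Fin.val_succ]; omega)
  rw [Qval, hsub, Qaux, hnow, hnext]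
  rfl

theorem bellmanCond_iff_totalCost_bellmanGap_eq_zero (hx : 0 ≤ x) :
    BellmanCond T P c x ↔ totalCost (bellmanGap P c) x = 0 := by
  rw [totalCost_eq_zero_iff hx bellmanGap_nonneg]
  refine forall₃_congr fun t s a => ?_
  have hxt : 0 ≤ x t s a := hx t s a
  rw [mul_eq_zero, or_iff_not_imp_left, ← ne_eq, ← hxt.lt_iff_ne']
  exact imp_congr_right fun _ => sub_eq_zero.symm

theorem totalCost_eq_add_totalCost_bellmanGap (hx : x ∈ Feas T P z0) :
    totalCost c x = ∑ s, z0 s * stateValue P c 0 s + totalCost (bellmanGap P c) x := by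
  have hV : ∑ t, ∑ s, ∑ a, x t s a * stateValue P c t s =
      ∑ s, z0 s * stateValue P c 0 s +
        ∑ t : Fin T, ∑ s, ∑ a, x t.succ s a * stateValue P c t.succ s := by
    simp only [Fin.sum_univ_succ, ← sum_mul, hx.2.1]
  have hQ : ∑ t, ∑ s, ∑ a, x t s a * Qval T P c t s a =
      totalCost c x + ∑ t : Fin T, ∑ s, ∑ a, x t.succ s a * stateValue P c t.succ s := by
    simp only [totalCost_apply, Fin.sum_univ_castSucc, Qval_last, Qval_castSucc, mul_add,
      sum_add_distrib, sum_mul_succ_of_mem_feas hx]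
    ring
  have hgap : totalCost (bellmanGap P c) x = ∑ t, ∑ s, ∑ a, x t s a * Qval T P c t s a -
      ∑ t, ∑ s, ∑ a, x t s a * stateValue P c t s := by
    simp only [totalCost_apply, bellmanGap, mul_sub, sum_sub_distrib]
  linarith

end Bellman

section Policy

variable {S A : Type*} [Fintype S] {T : ℕ}

/-- The state distribution at each time of the deterministic policy `π` started from `z0`. -/
def stateOccupancy (P : Fin (T + 1) → S → S → A → ℝ) (z0 : S → ℝ) (π : Fin (T + 1) → S → A) :
    Fin (T + 1) → S → ℝ :=
  Fin.induction z0 fun t μ s => ∑ s', P t.succ s s' (π t.castSucc s') * μ s'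

/-- The state-action distribution of the deterministic policy `π` started from `z0`. -/
def policyOccupancy [DecidableEq A] (P : Fin (T + 1) → S → S → A → ℝ) (z0 : S → ℝ)
    (π : Fin (T + 1) → S → A) (t : Fin (T + 1)) (s : S) : A → ℝ :=
  Pi.single (π t s) (stateOccupancy P z0 π t s)

variable {P : Fin (T + 1) → S → S → A → ℝ} {z0 : S → ℝ} {π : Fin (T + 1) → S → A}

theorem stateOccupancy_succ (t : Fin T) (s : S) : stateOccupancy P z0 π t.succ s =
    ∑ s', P t.succ s s' (π t.castSucc s') * stateOccupancy P z0 π t.castSucc s' := by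
  simp only [stateOccupancy, Fin.induction_succ]

theorem stateOccupancy_nonneg (hP : ∀ t s' s a, 0 ≤ P t s' s a) (hz0 : 0 ≤ z0)
    (t : Fin (T + 1)) : 0 ≤ stateOccupancy P z0 π t := by
  induction t using Fin.induction with
  | zero => exact hz0
  | succ t ih =>
    intro s
    rw [stateOccupancy_succ]
    exact sum_nonneg fun s' _ => mul_nonneg (hP _ _ _ _) (ih s')

theorem policyOccupancy_mem_feas [Fintype A] [DecidableEq A] (hP : ∀ t s' s a, 0 ≤ P t s' s a)
    (hz0 : 0 ≤ z0) : policyOccupancy P z0 π ∈ Feas T P z0 := by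
  refine ⟨fun t s => ?_, fun s => ?_, fun t ht s => ?_⟩
  · have hsingle : 0 ≤ policyOccupancy P z0 π t s :=
      Pi.single_nonneg.2 (stateOccupancy_nonneg hP hz0 t s)
    exact hsingle
  · simp only [policyOccupancy, sum_pi_single', mem_univ, if_true]
    rfl
  · simpa [policyOccupancy, Pi.single_apply] using (stateOccupancy_succ ⟨t, ht⟩ s).symm

theorem bellmanCond_policyOccupancy [Fintype A] [Nonempty A] [DecidableEq A]
    {c : Fin (T + 1) → S → A → ℝ}
    (hπ : ∀ t s, Qval T P c t s (π t s) = univ.inf' univ_nonempty (Qval T P c t s)) :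
    BellmanCond T P c (policyOccupancy P z0 π) := by
  intro t s a hpos
  have ha : a = π t s := by
    by_contra hne
    exact hpos.ne' (Pi.single_eq_of_ne hne _)
  rw [ha, hπ]

theorem exists_mem_feas_bellmanCond [Fintype A] [Nonempty A] (hP : ∀ t s' s a, 0 ≤ P t s' s a)
    (hz0 : 0 ≤ z0) (c : Fin (T + 1) → S → A → ℝ) : ∃ x ∈ Feas T P z0, BellmanCond T P c x := by
  classical
  have hgreedy (t : Fin (T + 1)) (s : S) :
      ∃ a, Qval T P c t s a = univ.inf' univ_nonempty (Qval T P c t s) := by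
    obtain ⟨a, -, ha⟩ := exists_mem_eq_inf' univ_nonempty (Qval T P c t s)
    exact ⟨a, ha.symm⟩
  choose π hπ using hgreedy
  exact ⟨policyOccupancy P z0 π, policyOccupancy_mem_feas hP hz0, bellmanCond_policyOccupancy hπ⟩

theorem bellmanCond_iff_isMinOn_totalCost [Fintype A] [Nonempty A]
    (hP : ∀ t s' s a, 0 ≤ P t s' s a) {c x : Fin (T + 1) → S → A → ℝ} (hx : x ∈ Feas T P z0) :
    BellmanCond T P c x ↔ IsMinOn (totalCost c) (Feas T P z0) x := by
  have hmin : IsMinOn (totalCost c) (Feas T P z0) x ↔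
      IsMinOn (totalCost (bellmanGap P c)) (Feas T P z0) x := by
    simp only [isMinOn_iff]
    refine forall₂_congr fun y hy => ?_
    rw [totalCost_eq_add_totalCost_bellmanGap hx, totalCost_eq_add_totalCost_bellmanGap hy,
      add_le_add_iff_left]
  rw [hmin, bellmanCond_iff_totalCost_bellmanGap_eq_zero hx.1]
  constructor <;> intro h
  · exact isMinOn_iff.2 fun y hy => h.trans_le (totalCost_nonneg hy.1 bellmanGap_nonneg)
  · have hz0 : 0 ≤ z0 := fun s => (sum_nonneg fun a _ => hx.1 0 s a).trans_eq (hx.2.1 s)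
    obtain ⟨y, hy, hyB⟩ := exists_mem_feas_bellmanCond hP hz0 c
    have hle := isMinOn_iff.1 h y hy
    rw [(bellmanCond_iff_totalCost_bellmanGap_eq_zero hy.1).1 hyB] at hle
    exact hle.antisymm (totalCost_nonneg hx.1 bellmanGap_nonneg)

end Policy

section Game

variable {ι S A : Type*} [Fintype S] [Fintype A] {T : ℕ}

/-- The set `D = ∏ᵢ 𝒳(Pⁱ, z₀ⁱ)` of feasible joint distributions. -/
def jointFeas (P : ι → Fin (T + 1) → S → S → A → ℝ) (z0 : ι → S → ℝ) :
    Set (ι → Fin (T + 1) → S → A → ℝ) :=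
  {x | ∀ i, x i ∈ Feas T (P i) (z0 i)}

theorem jointFeas_eq_pi (P : ι → Fin (T + 1) → S → S → A → ℝ) (z0 : ι → S → ℝ) :
    jointFeas P z0 = Set.univ.pi fun i => Feas T (P i) (z0 i) := by
  ext x
  simp only [jointFeas, Set.mem_ofPred_eq, Set.mem_univ_pi]

theorem convex_jointFeas (P : ι → Fin (T + 1) → S → S → A → ℝ) (z0 : ι → S → ℝ) :
    Convex ℝ (jointFeas P z0) := by
  rw [jointFeas_eq_pi]
  exact convex_pi fun _ _ => convex_feas

variable [Fintype ι]

/-- The total cost of all players, each charged for its own distribution only, as a linear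
functional of the joint distribution. -/
def jointCost (c : ι → Fin (T + 1) → S → A → ℝ) : (ι → Fin (T + 1) → S → A → ℝ) →ₗ[ℝ] ℝ where
  toFun x := ∑ i, totalCost (c i) (x i)
  map_add' x y := by simp only [Pi.add_apply, map_add, sum_add_distrib]
  map_smul' r x := by simp only [Pi.smul_apply, map_smul, smul_eq_mul, mul_sum, RingHom.id_apply]

theorem jointCost_apply (c x : ι → Fin (T + 1) → S → A → ℝ) :
    jointCost c x = ∑ i, totalCost (c i) (x i) := rfl

variable {P : ι → Fin (T + 1) → S → S → A → ℝ} {z0 : ι → S → ℝ}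
  {ξ : (ι → Fin (T + 1) → S → A → ℝ) → (ι → Fin (T + 1) → S → A → ℝ)}
  {F : (ι → Fin (T + 1) → S → A → ℝ) → ℝ}

theorem hasLineDerivAt_jointCost {x : ι → Fin (T + 1) → S → A → ℝ}
    (hξ : DifferentiableAt ℝ ξ x) (v w : ι → Fin (T + 1) → S → A → ℝ) :
    HasLineDerivAt ℝ (fun y => jointCost (ξ y) w) (jointCost (fderiv ℝ ξ x v) w) x v := by
  have hline : HasDerivAt (fun r : ℝ => ξ (x + r • v)) (fderiv ℝ ξ x v) 0 :=
    hξ.hasFDerivAt.hasLineDerivAt v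
  simp only [jointCost_apply, totalCost_apply]
  refine HasDerivAt.fun_sum fun i _ => HasDerivAt.fun_sum fun t _ => HasDerivAt.fun_sum fun s _ =>
    HasDerivAt.fun_sum fun a _ => HasDerivAt.const_mul _ ?_
  exact hasDerivAt_pi.1 (hasDerivAt_pi.1 (hasDerivAt_pi.1 (hasDerivAt_pi.1 hline i) t) s) a

theorem convexOn_of_hasLineDerivWithinAt_jointCost {D : Set (ι → Fin (T + 1) → S → A → ℝ)}
    (hD : Convex ℝ D) (hF : ∀ x ∈ D, ∀ v, HasLineDerivWithinAt ℝ F (jointCost (ξ x) v) D x v)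
    (hξ : ∀ x ∈ D, DifferentiableAt ℝ ξ x)
    (hpsd : ∀ x ∈ D, ∀ v, 0 ≤ jointCost (fderiv ℝ ξ x v) v) : ConvexOn ℝ D F :=
  convexOn_of_hasLineDerivWithinAt2_nonneg hD hF
    (fun x hx v => (hasLineDerivAt_jointCost (hξ x hx) v v).hasLineDerivWithinAt D) hpsd

theorem stmt7_general [Nonempty A] (hP : ∀ i t s' s a, 0 ≤ P i t s' s a)
    (hF : ConvexOn ℝ (jointFeas P z0) F) {xhat : ι → Fin (T + 1) → S → A → ℝ}
    (hxhat : xhat ∈ jointFeas P z0)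
    (hpot : ∀ v, HasLineDerivWithinAt ℝ F (jointCost (ξ xhat) v) (jointFeas P z0) xhat v) :
    IsMinOn F (jointFeas P z0) xhat ↔ ∀ i, BellmanCond T (P i) (ξ xhat i) (xhat i) :=
  calc IsMinOn F (jointFeas P z0) xhat
    _ ↔ IsMinOn (jointCost (ξ xhat)) (jointFeas P z0) xhat :=
      isMinOn_iff_isMinOn_of_hasLineDerivWithinAt hF hxhat hpot
    _ ↔ ∀ i, IsMinOn (totalCost (ξ xhat i)) (Feas T (P i) (z0 i)) (xhat i) := by
      rw [jointFeas_eq_pi] at hxhat ⊢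
      exact isMinOn_univ_pi_sum_iff hxhat
    _ ↔ ∀ i, BellmanCond T (P i) (ξ xhat i) (xhat i) :=
      forall_congr' fun i => (bellmanCond_iff_isMinOn_totalCost (hP i) (hxhat i)).symm

end Game

section Potential

variable {S A : Type*} [DecidableEq S] [DecidableEq A] {N T : ℕ}

theorem ebN_eq_single (i : Fin N) (t : Fin (T + 1)) (s : S) (a : A) :
    ebN N T i t s a = Pi.single i (Pi.single t (Pi.single s (Pi.single a 1))) := by
  funext i' t' s' a'
  by_cases hi : i' = i <;> by_cases ht : t' = t <;> by_cases hs : s' = s <;>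
    simp [ebN, eb, Pi.single_apply, hi, ht, hs]

variable [Fintype S] [Fintype A]

theorem jointCost_ebN (c : Fin N → Fin (T + 1) → S → A → ℝ) (i : Fin N) (t : Fin (T + 1)) (s : S)
    (a : A) : jointCost c (ebN N T i t s a) = c i t s a := by
  simp only [jointCost_apply, ebN_eq_single]
  rw [Fintype.sum_eq_single i fun j hj => by rw [Pi.single_eq_of_ne hj, map_zero],
    Pi.single_eq_same, totalCost_apply,
    Fintype.sum_eq_single t fun t' ht => by simp [Pi.single_eq_of_ne ht], Pi.single_eq_same,
    Fintype.sum_eq_single s fun s' hs => by simp [Pi.single_eq_of_ne hs], Pi.single_eq_same,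
    Fintype.sum_eq_single a fun a' ha => by simp [Pi.single_eq_of_ne ha], Pi.single_eq_same,
    one_mul]

theorem eq_jointCost_of_apply_ebN {L : (Fin N → Fin (T + 1) → S → A → ℝ) →ₗ[ℝ] ℝ}
    {c : Fin N → Fin (T + 1) → S → A → ℝ} (h : ∀ i t s a, L (ebN N T i t s a) = c i t s a) :
    L = jointCost c := by
  ext i t s a
  simpa [ebN_eq_single] using (h i t s a).trans (jointCost_ebN c i t s a).symm

theorem hasLineDerivAt_of_fderiv_ebN {F : (Fin N → Fin (T + 1) → S → A → ℝ) → ℝ}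
    {x c : Fin N → Fin (T + 1) → S → A → ℝ} (hF : DifferentiableAt ℝ F x)
    (hc : ∀ i t s a, fderiv ℝ F x (ebN N T i t s a) = c i t s a)
    (v : Fin N → Fin (T + 1) → S → A → ℝ) : HasLineDerivAt ℝ F (jointCost c v) x v := by
  have hL : (fderiv ℝ F x : _ →ₗ[ℝ] ℝ) = jointCost c := eq_jointCost_of_apply_ebN hc
  rw [← hL]
  exact hF.hasFDerivAt.hasLineDerivAt v

theorem convexOn_of_fderiv_ebN {U : Set (Fin N → Fin (T + 1) → S → A → ℝ)} (hUopen : IsOpen U)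
    (hUconv : Convex ℝ U)
    {ξ : (Fin N → Fin (T + 1) → S → A → ℝ) → (Fin N → Fin (T + 1) → S → A → ℝ)}
    (hξ : DifferentiableOn ℝ ξ U) (hpsd : ∀ x ∈ U, ∀ v, 0 ≤ jointCost (fderiv ℝ ξ x v) v)
    {F : (Fin N → Fin (T + 1) → S → A → ℝ) → ℝ} (hFdiff : ∀ x ∈ U, DifferentiableAt ℝ F x)
    (hpot : ∀ x ∈ U, ∀ i t s a, fderiv ℝ F x (ebN N T i t s a) = ξ x i t s a) :
    ConvexOn ℝ U F :=
  convexOn_of_hasLineDerivWithinAt_jointCost hUconv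
    (fun x hx v =>
      (hasLineDerivAt_of_fderiv_ebN (hFdiff x hx) (hpot x hx) v).hasLineDerivWithinAt U)
    (fun _ hx => hξ.differentiableAt (hUopen.mem_nhds hx)) hpsd

end Potential

/-- For an MDP congestion game whose cost vector ξ is C¹ with symmetric
positive definite Jacobian on a convex open set U ⊇ D = ∏ᵢ 𝒳(Pⁱ,z₀ⁱ), and F a potential
function (∂F/∂xⁱ(t,s,a) = ℓⁱ(t,s,a) on U): x̂ ∈ D globally minimizes F over D iff x̂ is a
Nash equilibrium, i.e. each x̂ⁱ satisfies the Bellman condition for cost ℓⁱ(·)(x̂). -/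
theorem stmt7 {S A : Type*} [Fintype S] [Fintype A] [Nonempty S] [Nonempty A]
    [DecidableEq S] [DecidableEq A] {T N : ℕ}
    (P : Fin N → Fin (T+1) → S → S → A → ℝ) (hP : ∀ i, IsKernel T (P i))
    (z0 : Fin N → S → ℝ) (hz0 : ∀ i s, 0 ≤ z0 i s)
    (ξ : (Fin N → Fin (T+1) → S → A → ℝ) → (Fin N → Fin (T+1) → S → A → ℝ))
    (U : Set (Fin N → Fin (T+1) → S → A → ℝ)) (hUopen : IsOpen U) (hUconv : Convex ℝ U)
    (hDU : {x | ∀ i, x i ∈ Feas T (P i) (z0 i)} ⊆ U)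
    (hC1 : ContDiffOn ℝ 1 ξ U)
    (hsymm : ∀ x ∈ U, ∀ i t s a, ∀ j t' s' a',
      fderiv ℝ ξ x (ebN N T j t' s' a') i t s a
        = fderiv ℝ ξ x (ebN N T i t s a) j t' s' a')
    (hpd : ∀ x ∈ U, ∀ v : Fin N → Fin (T+1) → S → A → ℝ, v ≠ 0 →
      0 < ∑ i, ∑ t, ∑ s, ∑ a, v i t s a * fderiv ℝ ξ x v i t s a)
    (F : (Fin N → Fin (T+1) → S → A → ℝ) → ℝ)
    (hFdiff : ∀ x ∈ U, DifferentiableAt ℝ F x)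
    (hpot : ∀ x ∈ U, ∀ i t s a, fderiv ℝ F x (ebN N T i t s a) = ξ x i t s a)
    (xhat : Fin N → Fin (T+1) → S → A → ℝ)
    (hxhatD : ∀ i, xhat i ∈ Feas T (P i) (z0 i)) :
    (∀ x : Fin N → Fin (T+1) → S → A → ℝ,
        (∀ i, x i ∈ Feas T (P i) (z0 i)) → F xhat ≤ F x) ↔
      ∀ i, BellmanCond T (P i) (fun t s a => ξ xhat i t s a) (xhat i) := by
  have hpsd : ∀ x ∈ U, ∀ v, 0 ≤ jointCost (fderiv ℝ ξ x v) v := fun x hx v =>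
    (eq_or_ne v 0).elim (fun hv => by simp [hv]) fun hv => (hpd x hx v hv).le
  have hF : ConvexOn ℝ U F :=
    convexOn_of_fderiv_ebN hUopen hUconv (hC1.differentiableOn one_ne_zero) hpsd hFdiff hpot
  have hline : ∀ v, HasLineDerivAt ℝ F (jointCost (ξ xhat) v) xhat v :=
    hasLineDerivAt_of_fderiv_ebN (hFdiff xhat (hDU hxhatD)) (hpot xhat (hDU hxhatD))
  exact isMinOn_iff.symm.trans (stmt7_general (fun i => (hP i).1)
    (hF.subset hDU (convex_jointFeas P z0)) hxhatD fun v => (hline v).hasLineDerivWithinAt _)
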